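/- Let K be a b-bounded b-convex body in a Minkowski space with strictly convex norm, and let S ⊆ K. Then bh₁(S) = K if and only if b-exp(K) ⊆ cl(S). In particular, K = bh₁(b-exp(K)). -/

import Mathlib

open Metric Set

/-- The ball hull of `S`: intersection of all closed balls of radius 1 containing `S`. -/
def ballHull {E : Type*} [NormedAddCommGroup E] (S : Set E) : Set E :=
  ⋂ x ∈ {x : E | S ⊆ closedBall x 1}, closedBall x 1

/-- The circumradius of `S`: the least `r ≥ 0` such that `S` is contained in some
closed ball of radius `r`. -/
noncomputable def circumradius {E : Type*} [NormedAddCommGroup E] (S : Set E) : ℝ :=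
  sInf {r : ℝ | 0 ≤ r ∧ ∃ x : E, S ⊆ closedBall x r}

/-- A b-convex body: a bounded nonempty set equal to its ball hull. -/
def IsBConvexBody {E : Type*} [NormedAddCommGroup E] (K : Set E) : Prop :=
  Bornology.IsBounded K ∧ K.Nonempty ∧ ballHull K = K

/-- `F` is an exposed b-face of `K`: `F = K ∩ S(y,1)` for some supporting sphere `S(y,1)`. -/
def IsExposedBFace {E : Type*} [NormedAddCommGroup E] (K F : Set E) : Prop :=
  ∃ y : E, K ⊆ closedBall y 1 ∧ (K ∩ sphere y 1).Nonempty ∧ F = K ∩ sphere y 1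

/-- The set of b-exposed points of `K`. -/
def bExp {E : Type*} [NormedAddCommGroup E] (K : Set E) : Set E :=
  {x : E | ∃ y : E, K ⊆ closedBall y 1 ∧ K ∩ sphere y 1 = {x}}

/-!
The heart of the matter is that a closed unit ball `B(z, 1)` containing all b-exposed points of `K`
contains `K`. If a farthest point of `K` from some centre is at distance `s ∈ (0, 1)` from it, that
point is b-exposed: dilating the ball about the point up to radius `1` gives, by strict convexity, a
ball whose sphere meets `K` only there. Start from a ball `B(c, r) ⊇ K` with `r < 1`. If `B(z, 1)`
missed a point of `K`, move the centre from `c` to `z` and let the radius grow linearly from some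
`r' ∈ (r, 1)` to `1`. At some time before the end the ball contains `K` and its sphere meets `K`.
The contact point is b-exposed and, since `r < r'`, convexity of the distance to it puts it outside
`B(z, 1)`, a contradiction.

Conversely, if a b-exposed point `x` of `K` with supporting sphere `S(y, 1)` is not in the closure
of `S`, then by compactness `S` lies in a ball `B(y, s)` with `s < 1`. So does its ball hull, which
therefore misses `x`.
-/

section MetricSpace

variable {P : Type*} [PseudoMetricSpace P] {K : Set P}

theorem exists_subset_closedBall_inter_sphere_nonempty {T : Type*} [TopologicalSpace T]
    [PreconnectedSpace T] (hK : IsCompact K) {c : T → P} {ρ : T → ℝ} (hc : Continuous c)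
    (hρ : Continuous ρ) {a b : T} (ha : K ⊆ closedBall (c a) (ρ a))
    (hb : ¬ K ⊆ closedBall (c b) (ρ b)) :
    ∃ t, K ⊆ closedBall (c t) (ρ t) ∧ (K ∩ sphere (c t) (ρ t)).Nonempty := by
  obtain ⟨q, hqK, hq⟩ := not_subset.1 hb
  let farthest (t : T) : ℝ := sSup ((fun p ↦ dist p (c t)) '' K)
  have isGreatest_farthest (t : T) : IsGreatest ((fun p ↦ dist p (c t)) '' K) (farthest t) :=
    (hK.image (by fun_prop)).isGreatest_sSup (Set.Nonempty.image _ ⟨q, hqK⟩)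
  have continuous_farthest : Continuous farthest := hK.continuous_sSup (by fun_prop)
  have farthest_le : farthest a ≤ ρ a :=
    (isLUB_le_iff (isGreatest_farthest a).isLUB).2 (forall_mem_image.2 fun _ hp ↦ ha hp)
  have le_farthest : ρ b ≤ farthest b :=
    (not_le.1 hq).le.trans ((isGreatest_farthest b).2 (mem_image_of_mem _ hqK))
  obtain ⟨t, ht⟩ := intermediate_value_univ₂ continuous_farthest hρ farthest_le le_farthest
  obtain ⟨⟨p, hpK, hp⟩, hmax⟩ := isGreatest_farthest t
  exact ⟨t, fun x hx ↦ (hmax (mem_image_of_mem _ hx)).trans_eq ht, p, hpK, hp.trans ht⟩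

theorem exists_subset_closedBall_of_subset_ball (hK : IsCompact K) {y : P} {R : ℝ} (hR : 0 < R)
    (h : K ⊆ ball y R) : ∃ s ∈ Ico 0 R, K ⊆ closedBall y s := by
  rcases K.eq_empty_or_nonempty with rfl | hne
  · exact ⟨0, ⟨le_rfl, hR⟩, empty_subset _⟩
  obtain ⟨p, hpK, hmax⟩ := hK.exists_isMaxOn hne (f := fun p ↦ dist p y) (by fun_prop)
  exact ⟨dist p y, ⟨dist_nonneg, h hpK⟩, fun x hx ↦ hmax hx⟩

end MetricSpace

section StrictConvexSpace

variable {V P : Type*} [NormedAddCommGroup V] [NormedSpace ℝ V] [StrictConvexSpace ℝ V]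
  [MetricSpace P] [NormedAddTorsor V P]

theorem closedBall_lineMap_inter_sphere (p y : P) {s : ℝ} (hs₀ : 0 ≤ s) (hs₁ : s < 1) :
    closedBall (AffineMap.lineMap p y s) (s * dist p y) ∩ sphere y (dist p y) = {p} := by
  set c : P := AffineMap.lineMap p y s with hc
  have hcy : dist c y = (1 - s) * dist p y := by
    rw [hc, dist_lineMap_right, Real.norm_of_nonneg (by linarith)]
  refine Subset.antisymm (fun x ⟨hxc, hxy⟩ ↦ ?_) (singleton_subset_iff.2 ⟨?_, rfl⟩)
  · rw [mem_closedBall] at hxc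
    rw [mem_sphere] at hxy
    have hxc' : dist x c = s * dist x y := by
      rw [hxy]
      linarith [dist_triangle x c y]
    have hx : c = AffineMap.lineMap x y s :=
      eq_lineMap_of_dist_eq_mul_of_dist_eq_mul hxc' (by rw [hcy, hxy])
    have hxp : (1 - s) • (x -ᵥ p) = 0 := by
      have := vsub_eq_zero_iff_eq.2 (hx.symm.trans hc)
      rwa [AffineMap.lineMap_vsub_lineMap, vsub_self, AffineMap.lineMap_apply_module, smul_zero,
        add_zero] at this
    exact vsub_eq_zero_iff_eq.1 ((smul_eq_zero_iff_right (by linarith)).1 hxp)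
  · rw [mem_closedBall, hc, dist_left_lineMap, Real.norm_of_nonneg hs₀]

end StrictConvexSpace

section BallHull

variable {E : Type*} [NormedAddCommGroup E] {K S T : Set E}

theorem mem_ballHull {p : E} : p ∈ ballHull S ↔ ∀ y, S ⊆ closedBall y 1 → p ∈ closedBall y 1 :=
  mem_iInter₂

theorem isClosed_ballHull : IsClosed (ballHull S) :=
  isClosed_biInter fun _ _ ↦ isClosed_closedBall

theorem subset_ballHull : S ⊆ ballHull S :=
  subset_iInter₂ fun _ hy ↦ hy

theorem ballHull_mono (h : S ⊆ T) : ballHull S ⊆ ballHull T :=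
  biInter_subset_biInter_left fun _ ↦ h.trans

theorem bExp_subset : bExp K ⊆ K := by
  rintro x ⟨y, -, hy⟩
  exact (hy.ge rfl).1

theorem IsBConvexBody.isCompact [ProperSpace E] (hK : IsBConvexBody K) : IsCompact K :=
  isCompact_of_isClosed_isBounded (hK.2.2 ▸ isClosed_ballHull) hK.1

theorem exists_subset_closedBall_of_circumradius_lt (hS : Bornology.IsBounded S) {ρ : ℝ}
    (hρ : circumradius S < ρ) : ∃ c, ∃ r < ρ, S ⊆ closedBall c r := by
  have hne : {r : ℝ | 0 ≤ r ∧ ∃ x : E, S ⊆ closedBall x r}.Nonempty :=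
    let ⟨R, hR₀, hR⟩ := hS.subset_closedBall_lt 0 0
    ⟨R, hR₀.le, 0, hR⟩
  obtain ⟨r, ⟨-, c, hc⟩, hr⟩ := exists_lt_of_csInf_lt hne hρ
  exact ⟨c, r, hr, hc⟩

variable [NormedSpace ℝ E]

theorem ballHull_subset_closedBall {y : E} {s : ℝ} (hs₀ : 0 ≤ s) (hs₁ : s ≤ 1)
    (hS : S ⊆ closedBall y s) : ballHull S ⊆ closedBall y s := by
  intro p hp
  rcases eq_or_ne p y with rfl | hpy
  · exact mem_closedBall_self hs₀
  -- Move the centre away from `p` by `1 - s`, as far as the unit ball still contains `B(y, s)`.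
  set d : ℝ := dist p y with hd
  have hd₀ : 0 < d := dist_pos.2 hpy
  have hdiv : 0 ≤ (1 - s) / d := div_nonneg (sub_nonneg.2 hs₁) hd₀.le
  set q : E := AffineMap.lineMap p y (1 + (1 - s) / d) with hq
  have hyq : dist y q = 1 - s := by
    rw [hq, dist_right_lineMap, ← hd, sub_add_cancel_left, norm_neg, Real.norm_of_nonneg hdiv,
      div_mul_cancel₀ _ hd₀.ne']
  have hpq : dist p q = d + (1 - s) := by
    rw [hq, dist_left_lineMap, ← hd, Real.norm_of_nonneg (by linarith), add_mul, one_mul,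
      div_mul_cancel₀ _ hd₀.ne']
  have hpq_le : dist p q ≤ 1 :=
    mem_ballHull.1 hp q (hS.trans (closedBall_subset_closedBall' (by linarith)))
  rw [mem_closedBall]
  linarith

theorem bExp_ballHull_subset_closure (hS : IsCompact (closure S)) :
    bExp (ballHull S) ⊆ closure S := by
  rintro x ⟨y, hy, hxy⟩
  by_contra hxS
  have closure_subset : closure S ⊆ ballHull S := closure_minimal subset_ballHull isClosed_ballHull
  have closure_subset_ball : closure S ⊆ ball y 1 := by
    refine fun q hq ↦ mem_ball.2 (lt_of_le_of_ne (hy (closure_subset hq)) fun hqy ↦ hxS ?_)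
    have hqx : q = x := hxy.le ⟨closure_subset hq, hqy⟩
    exact hqx ▸ hq
  obtain ⟨s, hs, hs_ball⟩ := exists_subset_closedBall_of_subset_ball hS one_pos closure_subset_ball
  have hull_subset := ballHull_subset_closedBall hs.1 hs.2.le (subset_closure.trans hs_ball)
  have hx : x ∈ ballHull S ∩ sphere y 1 := hxy.ge rfl
  exact hs.2.not_ge (hx.2.ge.trans (hull_subset hx.1))

variable [StrictConvexSpace ℝ E]

theorem mem_bExp_of_subset_closedBall {c p : E} {s : ℝ} (hs₀ : 0 < s) (hs₁ : s < 1)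
    (hK : K ⊆ closedBall c s) (hpK : p ∈ K) (hpc : dist p c = s) : p ∈ bExp K := by
  set y : E := AffineMap.lineMap p c s⁻¹ with hy
  have hpy : dist p y = 1 := by
    rw [hy, dist_left_lineMap, hpc, Real.norm_of_nonneg (by positivity), inv_mul_cancel₀ hs₀.ne']
  have hc : AffineMap.lineMap p y s = c := by
    rw [hy, AffineMap.lineMap_lineMap_right, mul_inv_cancel₀ hs₀.ne', AffineMap.lineMap_apply_one]
  have hcy : dist c y = 1 - s := by
    rw [← hc, dist_lineMap_right, hpy, Real.norm_of_nonneg (by linarith), mul_one]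
  have touch := closedBall_lineMap_inter_sphere p y hs₀.le hs₁
  rw [hc, hpy, mul_one] at touch
  exact ⟨y, hK.trans (closedBall_subset_closedBall' (by linarith)),
    ((inter_subset_inter_left _ hK).trans touch.le).antisymm (singleton_subset_iff.2 ⟨hpK, hpy⟩)⟩

theorem subset_closedBall_of_bExp_subset {c z : E} {r : ℝ} (hK : IsCompact K) (hr : r < 1)
    (hc : K ⊆ closedBall c r) (hz : bExp K ⊆ closedBall z 1) : K ⊆ closedBall z 1 := by
  by_contra hKz
  obtain ⟨q, hq, -⟩ := not_subset.1 hKz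
  have hr₀ : 0 ≤ r := dist_nonneg.trans (hc hq)
  obtain ⟨r', hrr', hr'⟩ := exists_between hr
  let center (t : unitInterval) : E := AffineMap.lineMap c z (t : ℝ)
  let radius (t : unitInterval) : ℝ := AffineMap.lineMap r' 1 (t : ℝ)
  obtain ⟨t, hKt, p, hpK, hp⟩ : ∃ t, K ⊆ closedBall (center t) (radius t) ∧
      (K ∩ sphere (center t) (radius t)).Nonempty := by
    refine exists_subset_closedBall_inter_sphere_nonempty (a := 0) (b := 1) hK (by fun_prop)
      (by fun_prop) ?_ ?_
    · simpa [center, radius] using hc.trans (closedBall_subset_closedBall hrr'.le)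
    · simpa [center, radius] using hKz
  have ht₀ : 0 ≤ (t : ℝ) := t.2.1
  have ht₁ : (t : ℝ) < 1 := lt_of_le_of_ne t.2.2 fun h ↦ by
    rw [show t = 1 from Subtype.ext h] at hKt
    exact hKz (by simpa [center, radius] using hKt)
  have radius_eq : radius t = (1 - t) * r' + t := by simp [radius, AffineMap.lineMap_apply_module]
  have hp_exp : p ∈ bExp K :=
    mem_bExp_of_subset_closedBall (by rw [radius_eq]; nlinarith) (by rw [radius_eq]; nlinarith)
      hKt hpK hp
  have radius_le : radius t ≤ (1 - t) * r + t := calc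
    radius t = dist p (center t) := hp.symm
    _ ≤ (1 - t) * dist p c + t * dist p z := by
      simpa [center, AffineMap.lineMap_apply_module, dist_comm] using
        (convexOn_univ_dist p).2 (mem_univ c) (mem_univ z) (by linarith) ht₀ (sub_add_cancel 1 _)
    _ ≤ (1 - t) * r + t * 1 := by
      gcongr
      exacts [hc hpK, hz hp_exp]
    _ = (1 - t) * r + t := by rw [mul_one]
  have mul_le : (1 - t) * r' ≤ (1 - t) * r := by linarith
  exact hrr'.not_ge (le_of_mul_le_mul_left mul_le (sub_pos.2 ht₁))

theorem subset_ballHull_of_bExp_subset_closure (hK : IsCompact K) (hbb : circumradius K < 1)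
    (hS : bExp K ⊆ closure S) : K ⊆ ballHull S := by
  obtain ⟨c, r, hr, hc⟩ := exists_subset_closedBall_of_circumradius_lt hK.isBounded hbb
  exact fun p hp ↦ mem_ballHull.2 fun y hy ↦ subset_closedBall_of_bExp_subset hK hr hc
    (hS.trans (closure_minimal hy isClosed_closedBall)) hp

end BallHull

theorem stmt_16_general {E : Type*} [NormedAddCommGroup E] [NormedSpace ℝ E]
    [StrictConvexSpace ℝ E] (K : Set E) (hK : IsCompact K) (hKh : ballHull K = K)
    (hbb : circumradius K < 1) (S : Set E) (hS : S ⊆ K) :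
    (ballHull S = K ↔ bExp K ⊆ closure S) ∧ K = ballHull (bExp K) := by
  have hull_eq {T : Set E} (hT : T ⊆ K) (hexp : bExp K ⊆ closure T) : ballHull T = K :=
    ((ballHull_mono hT).trans hKh.le).antisymm (subset_ballHull_of_bExp_subset_closure hK hbb hexp)
  refine ⟨⟨?_, hull_eq hS⟩, (hull_eq bExp_subset subset_closure).symm⟩
  rintro rfl
  exact bExp_ballHull_subset_closure (hK.closure_of_subset hS)

theorem stmt_16 {E : Type*} [NormedAddCommGroup E] [NormedSpace ℝ E]
    [FiniteDimensional ℝ E] [Nontrivial E] [StrictConvexSpace ℝ E]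
    (K : Set E) (hK : IsBConvexBody K) (hbb : circumradius K < 1)
    (S : Set E) (hS : S ⊆ K) :
    (ballHull S = K ↔ bExp K ⊆ closure S) ∧ K = ballHull (bExp K) := by
  have : ProperSpace E := FiniteDimensional.proper_real E
  exact stmt_16_general K hK.isCompact hK.2.2 hbb S hS
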